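/- Let u be a Lyndon word and v a nonempty word with v ≫ u. Then for every word b the concatenation vb satisfies vb ≫ u. -/

import Mathlib

/-- A word `u` is a Lyndon word if it is nonempty and lexicographically smaller than
each of its proper nonempty suffixes. -/
def IsLyndon {X : Type*} [LinearOrder X] (u : List X) : Prop :=
  u ≠ [] ∧ ∀ v w : List X, v ≠ [] → w ≠ [] → u = v ++ w → List.Lex (· < ·) u w

/-- `ls` is a Lyndon factorization of `u`: all factors are Lyndon words, the factors are
(lexicographically) nonincreasing, and their concatenation is `u`. -/
def IsLyndonFactorization {X : Type*} [LinearOrder X] (ls : List (List X)) (u : List X) : Prop :=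
  (∀ l ∈ ls, IsLyndon l) ∧ ls.Chain' (fun a b => ¬ List.Lex (· < ·) a b) ∧ ls.flatten = u

/-- `v ≫ u` : the first Lyndon letter of the Lyndon decomposition of `v` is
lexicographically greater than `u`. -/
def MuchGt {X : Type*} [LinearOrder X] (v u : List X) : Prop :=
  ∃ (l : List X) (t : List (List X)),
    IsLyndonFactorization (l :: t) v ∧ List.Lex (· < ·) u l

/-!
If `a < m` are Lyndon words then `a ++ m` is a Lyndon word. Hence a Lyndon word `l` put in front of
a Lyndon factorization either already extends it or can be merged with its first factor, and after
finitely many merges the first factor of the resulting factorization still begins with `l`. So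
`v ≫ u` holds exactly when some Lyndon prefix of `v` is greater than `u`, and prefixes of `v` are
prefixes of `v ++ b`.
-/

theorem lex_append_append_of_not_prefix {α : Type*} {r : α → α → Prop} {a b : List α}
    (h : List.Lex r a b) (hab : ¬ a <+: b) (s t : List α) : List.Lex r (a ++ s) (b ++ t) := by
  induction h with
  | nil => exact absurd List.nil_prefix hab
  | rel hr => exact .rel hr
  | cons _ ih => exact .cons (ih fun hp => hab (List.prefix_cons_inj _ |>.2 hp))

section

variable {X : Type*} [LinearOrder X] {a l m u v w : List X}

theorem IsLyndon.singleton (x : X) : IsLyndon [x] := by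
  refine ⟨List.cons_ne_nil x [], fun v w hv hw hvw => ?_⟩
  rcases List.singleton_eq_append_iff.1 hvw with ⟨rfl, -⟩ | ⟨-, rfl⟩
  · exact absurd rfl hv
  · exact absurd rfl hw

theorem IsLyndon.le_of_suffix (hm : IsLyndon m) (hw : w ≠ []) (hwm : w <:+ m) : m ≤ w := by
  obtain ⟨v, rfl⟩ := hwm
  rcases eq_or_ne v [] with rfl | hv
  · exact le_rfl
  · exact le_of_lt (hm.2 v w hv hw rfl)

theorem IsLyndon.append_lt (hm : IsLyndon m) (ha : a ≠ []) (h : a < m) : a ++ m < m := by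
  by_cases hp : a <+: m
  · obtain ⟨c, rfl⟩ := hp
    have hc : c ≠ [] := by
      rintro rfl
      simp at h
    exact List.append_left_lt (hm.2 a c ha hc rfl)
  · simpa using lex_append_append_of_not_prefix h hp m []

theorem IsLyndon.append (ha : IsLyndon a) (hm : IsLyndon m) (h : a < m) : IsLyndon (a ++ m) := by
  have ham : a ++ m < m := hm.append_lt ha.1 h
  refine ⟨List.append_ne_nil_of_left_ne_nil ha.1 m, fun v w hv hw hvw => ?_⟩
  rcases List.append_eq_append_iff.1 hvw with ⟨c, -, hmc⟩ | ⟨c, hac, rfl⟩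
  · exact ham.trans_le (hm.le_of_suffix hw ⟨c, hmc.symm⟩)
  · rcases eq_or_ne c [] with rfl | hc
    · exact ham
    · have hlen : c.length < a.length := by
        simpa [hac] using List.length_pos_iff.2 hv
      have hnp : ¬ a <+: c := fun hp => hlen.not_ge hp.length_le
      exact lex_append_append_of_not_prefix (ha.2 v c hv hc hac) hnp m m

theorem IsLyndonFactorization.exists_append_left {ls : List (List X)}
    (hls : IsLyndonFactorization ls w) (hl : IsLyndon l) :
    ∃ s t, IsLyndonFactorization ((l ++ s) :: t) (l ++ w) := by
  induction ls generalizing l w with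
  | nil =>
    obtain ⟨-, -, rfl⟩ := hls
    exact ⟨[], [], by simpa using hl, List.isChain_singleton _, by simp⟩
  | cons m ls ih =>
    obtain ⟨hlyn, hchain, rfl⟩ := hls
    obtain ⟨hm, hlyn'⟩ := List.forall_mem_cons.1 hlyn
    by_cases hlm : l < m
    · obtain ⟨s, t, hst⟩ := ih ⟨hlyn', hchain.tail, rfl⟩ (hl.append hm hlm)
      exact ⟨m ++ s, t, by simpa using hst⟩
    · refine ⟨[], m :: ls, ?_⟩
      rw [List.append_nil]
      exact ⟨List.forall_mem_cons.2 ⟨hl, hlyn⟩, List.isChain_cons_cons.2 ⟨hlm, hchain⟩, rfl⟩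

theorem exists_isLyndonFactorization (w : List X) : ∃ ls, IsLyndonFactorization ls w := by
  induction w with
  | nil => exact ⟨[], by simp, List.isChain_nil, rfl⟩
  | cons x w ih =>
    obtain ⟨ls, hls⟩ := ih
    obtain ⟨s, t, hst⟩ := hls.exists_append_left (.singleton x)
    exact ⟨_, hst⟩

theorem muchGt_iff_exists_prefix : MuchGt v u ↔ ∃ l, IsLyndon l ∧ l <+: v ∧ u < l := by
  constructor
  · rintro ⟨l, t, ⟨hlyn, -, rfl⟩, hul⟩
    exact ⟨l, hlyn l List.mem_cons_self, List.prefix_append l t.flatten, hul⟩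
  · rintro ⟨l, hl, ⟨w, rfl⟩, hul⟩
    obtain ⟨ls, hls⟩ := exists_isLyndonFactorization w
    obtain ⟨s, t, hst⟩ := hls.exists_append_left hl
    exact ⟨l ++ s, t, hst, List.Lex.append_right _ s hul⟩

theorem muchGt_append_general (hvu : MuchGt v u) (b : List X) : MuchGt (v ++ b) u := by
  obtain ⟨l, hl, hlv, hul⟩ := muchGt_iff_exists_prefix.1 hvu
  exact muchGt_iff_exists_prefix.2 ⟨l, hl, hlv.trans (List.prefix_append v b), hul⟩

end

/-- If `u` is a Lyndon word and `v` a nonempty word with `v ≫ u`, then `v ++ b ≫ u`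
for every word `b`. -/
theorem muchGt_append {X : Type*} [Fintype X] [LinearOrder X]
    (u v : List X) (hu : IsLyndon u) (hv : v ≠ []) (hvu : MuchGt v u) :
    ∀ b : List X, MuchGt (v ++ b) u :=
  muchGt_append_general hvu
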